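/- (Lemma 1(iii)) Under the balanced-design assumption, there exists a constant C depending only on δ such that Σ_{i,j} A_ij⁴ ≤ C K_Z; consequently (1/K_Z²) Σ_{i,j} A_ij⁴ → 0 as K_Z → ∞. -/

import Mathlib

open Matrix Finset

/-- The residual-maker (annihilator) projection `M_W = I - W (W'W)⁻¹ W'`. -/
noncomputable def annihilator {N KW : ℕ} (W : Matrix (Fin N) (Fin KW) ℝ) :
    Matrix (Fin N) (Fin N) ℝ :=
  1 - W * (Wᵀ * W)⁻¹ * Wᵀ

/-- The balanced-design assumption for the matrices `W`, `P⊥`, the vector `θ` and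
the constant `δ`: `W` has full column rank, `P⊥` is a symmetric idempotent matrix of rank
`K_Z` with `M_W P⊥ = P⊥ M_W = P⊥`, `θ` solves `∑_j (M_W)_ij² θ_j = (P⊥)_ii` with `θ_i ≥ 0`,
`min_i (M_W)_ii > 1/2`, and `(P⊥)_ii/(M_W)_ii² ≤ δ` for all `i`. -/
structure BalancedDesign {N KW : ℕ} (KZ : ℕ) (W : Matrix (Fin N) (Fin KW) ℝ)
    (Pperp : Matrix (Fin N) (Fin N) ℝ) (θ : Fin N → ℝ) (δ : ℝ) : Prop where
  hWrank : W.rank = KW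
  hPsymm : Pperp.IsSymm
  hPidem : Pperp * Pperp = Pperp
  hPrank : Pperp.rank = KZ
  hMP : annihilator W * Pperp = Pperp
  hPM : Pperp * annihilator W = Pperp
  hθ : ∀ i, ∑ j, (annihilator W i j) ^ 2 * θ j = Pperp i i
  hθnn : ∀ i, 0 ≤ θ i
  hMdiag : ∀ i, 1 / 2 < annihilator W i i
  hδ : ∀ i, Pperp i i / (annihilator W i i) ^ 2 ≤ δ

/-- The diagonal-free matrix `A = P⊥ − M_W D_θ M_W`. -/
noncomputable def Amat {N KW : ℕ} (W : Matrix (Fin N) (Fin KW) ℝ)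
    (Pperp : Matrix (Fin N) (Fin N) ℝ) (θ : Fin N → ℝ) : Matrix (Fin N) (Fin N) ℝ :=
  Pperp - annihilator W * Matrix.diagonal θ * annihilator W


lemma annih_symm {N KW : ℕ} (W : Matrix (Fin N) (Fin KW) ℝ) :
    (annihilator W)ᵀ = annihilator W := by
  unfold annihilator
  simp [Matrix.transpose_sub, Matrix.transpose_mul, Matrix.transpose_nonsing_inv, Matrix.mul_assoc]

lemma annih_idem {N KW : ℕ} (W : Matrix (Fin N) (Fin KW) ℝ) :
    annihilator W * annihilator W = annihilator W := by
  unfold annihilator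
  by_cases h : IsUnit (Wᵀ * W).det
  · have h1 : W * (Wᵀ * W)⁻¹ * Wᵀ * (W * (Wᵀ * W)⁻¹ * Wᵀ) = W * (Wᵀ * W)⁻¹ * Wᵀ := by
      calc W * (Wᵀ * W)⁻¹ * Wᵀ * (W * (Wᵀ * W)⁻¹ * Wᵀ)
          = W * ((Wᵀ * W)⁻¹ * (Wᵀ * W)) * (Wᵀ * W)⁻¹ * Wᵀ := by
            simp only [Matrix.mul_assoc]
        _ = _ := by rw [Matrix.nonsing_inv_mul _ h, Matrix.mul_one]
    rw [Matrix.sub_mul, Matrix.mul_sub, Matrix.mul_sub, h1]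
    simp
  · rw [Matrix.nonsing_inv_apply_not_isUnit _ h]
    simp

lemma trace_rank_idem {N : ℕ} (P : Matrix (Fin N) (Fin N) ℝ) (h : P * P = P) :
    P.trace = (P.rank : ℝ) := by
  have h1 : IsIdempotentElem (Matrix.toLin' P) := by
    unfold IsIdempotentElem
    rw [Module.End.mul_eq_comp, ← Matrix.toLin'_mul, h]
  have h2 := (LinearMap.IsIdempotentElem.isProj_range _ h1).trace
  rw [Matrix.trace_toLin'_eq] at h2
  rw [h2]
  rfl

lemma sum_sq_symm {N : ℕ} (B : Matrix (Fin N) (Fin N) ℝ) (h : Bᵀ = B) :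
    ∑ i, ∑ j, (B i j) ^ 2 = (B * B).trace := by
  simp only [Matrix.trace, Matrix.diag_apply, Matrix.mul_apply]
  refine Finset.sum_congr rfl fun i _ => Finset.sum_congr rfl fun j _ => ?_
  have : B j i = B i j := congrFun (congrFun h i) j
  rw [this, sq]

lemma main_bound {δ : ℝ} (hδ : δ < 1) {N KW KZ : ℕ} {W : Matrix (Fin N) (Fin KW) ℝ}
    {P : Matrix (Fin N) (Fin N) ℝ} {θ : Fin N → ℝ} (h : BalancedDesign KZ W P θ δ) :
    ∑ i, ∑ j, (Amat W P θ i j) ^ 4 ≤ 16 * (KZ : ℝ) := by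
  have hMs := annih_symm W
  have hMi := annih_idem W
  have hθ := h.hθ
  have hd := h.hMdiag
  have hδ' := h.hδ
  unfold Amat
  generalize annihilator W = M at *
  have hnn := h.hθnn
  have hMs' : ∀ i j, M j i = M i j := fun i j => congrFun (congrFun hMs i) j
  have hPs' : ∀ i j, P j i = P i j := fun i j => congrFun (congrFun h.hPsymm i) j
  have hPii : ∀ i, P i i = ∑ j, (P i j) ^ 2 := by
    intro i
    conv_lhs => rw [← h.hPidem]
    rw [Matrix.mul_apply]
    exact Finset.sum_congr rfl fun j _ => by rw [hPs' i j, sq]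
  have hPij : ∀ i j, (P i j) ^ 2 ≤ P i i := by
    intro i j
    rw [hPii i]
    exact Finset.single_le_sum (f := fun j => (P i j) ^ 2) (fun _ _ => sq_nonneg _) (Finset.mem_univ j)
  have hP0 : ∀ i, 0 ≤ P i i := fun i => (sq_nonneg _).trans (hPij i i)
  have hP1 : ∀ i, P i i ≤ 1 := fun i => by nlinarith [hPij i i]
  have hθ1 : ∀ i, θ i ≤ 1 := by
    intro i
    have h1 : (M i i) ^ 2 * θ i ≤ P i i := by
      rw [← hθ i]
      exact Finset.single_le_sum (f := fun j => (M i j) ^ 2 * θ j)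
        (fun j _ => mul_nonneg (sq_nonneg _) (hnn j)) (Finset.mem_univ i)
    have hp : 0 < (M i i) ^ 2 := by have := hd i; positivity
    have h2 := hδ' i
    rw [div_le_iff₀ hp] at h2
    by_contra hc
    push Not at hc
    nlinarith
  set B := M * Matrix.diagonal θ * M with hB
  have hBs : Bᵀ = B := by
    rw [hB]
    simp [Matrix.transpose_mul, hMs, Matrix.mul_assoc]
  have hBij : ∀ i j, B i j = ∑ k, M i k * θ k * M j k := by
    intro i j
    rw [hB, Matrix.mul_apply]
    refine Finset.sum_congr rfl fun k _ => ?_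
    rw [Matrix.mul_diagonal, hMs' j k]
  have hB1 : ∀ i j, (B i j) ^ 2 ≤ 1 := by
    intro i j
    have hcs := Finset.sum_mul_sq_le_sq_mul_sq Finset.univ
      (fun k => M i k * √(θ k)) (fun k => M j k * √(θ k))
    have e : ∀ i j, ∑ k, (M i k * √(θ k)) * (M j k * √(θ k)) = B i j := by
      intro i j
      rw [hBij]
      refine Finset.sum_congr rfl fun k _ => ?_
      linear_combination (M i k * M j k) * Real.mul_self_sqrt (hnn k)
    have e2 : ∀ i, ∑ k, (M i k * √(θ k)) ^ 2 = P i i := by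
      intro i
      rw [← hθ i]
      refine Finset.sum_congr rfl fun k _ => ?_
      rw [mul_pow, Real.sq_sqrt (hnn k)]
    rw [e, e2, e2] at hcs
    nlinarith [hP0 i, hP0 j, hP1 i, hP1 j, mul_nonneg (hP0 i) (sub_nonneg.2 (hP1 j))]
  have hPtr : ∑ i, P i i = (KZ : ℝ) := by
    have := trace_rank_idem P h.hPidem
    rw [h.hPrank] at this
    exact this
  have hPsum : ∑ i, ∑ j, (P i j) ^ 2 = (KZ : ℝ) := by
    rw [← hPtr]
    exact Finset.sum_congr rfl fun i _ => (hPii i).symm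
  have hBsum : ∑ i, ∑ j, (B i j) ^ 2 ≤ (KZ : ℝ) := by
    have e1 : (B * B).trace = ((M * Matrix.diagonal θ) * (M * Matrix.diagonal θ)).trace := by
      have : B * B = M * (Matrix.diagonal θ * M * Matrix.diagonal θ * M) := by
        rw [hB]
        calc _ = M * Matrix.diagonal θ * (M * M) * Matrix.diagonal θ * M := by
              simp only [Matrix.mul_assoc]
          _ = _ := by rw [hMi]; simp only [Matrix.mul_assoc]
      rw [this, Matrix.trace_mul_comm]
      have : Matrix.diagonal θ * M * Matrix.diagonal θ * M * M
          = Matrix.diagonal θ * (M * Matrix.diagonal θ * M) := by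
        rw [Matrix.mul_assoc _ M M, hMi]; simp only [Matrix.mul_assoc]
      rw [this, Matrix.trace_mul_comm]
      simp only [Matrix.mul_assoc]
    rw [sum_sq_symm B hBs, e1, ← hPtr]
    simp only [Matrix.trace, Matrix.diag_apply]
    refine Finset.sum_le_sum fun i _ => ?_
    have : ((M * Matrix.diagonal θ) * (M * Matrix.diagonal θ)) i i = θ i * P i i := by
      rw [Matrix.mul_apply, ← hθ i, Finset.mul_sum]
      refine Finset.sum_congr rfl fun k _ => ?_
      rw [Matrix.mul_diagonal, Matrix.mul_diagonal, hMs' i k]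
      ring
    rw [this]
    nlinarith [hP0 i, hθ1 i]
  have hpt : ∀ i j, ((P - B) i j) ^ 4 ≤ 8 * (P i j) ^ 2 + 8 * (B i j) ^ 2 := by
    intro i j
    rw [Matrix.sub_apply]
    have hp : (P i j) ^ 2 ≤ 1 := (hPij i j).trans (hP1 i)
    have hb := hB1 i j
    generalize P i j = p at *
    generalize B i j = b at *
    have h1 : (p - b) ^ 2 ≤ 2 * p ^ 2 + 2 * b ^ 2 := by nlinarith [sq_nonneg (p + b)]
    have h2 : (p - b) ^ 2 ≤ 4 := by linarith
    nlinarith [mul_le_mul_of_nonneg_left h2 (sq_nonneg (p - b))]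
  calc ∑ i, ∑ j, ((P - B) i j) ^ 4
      ≤ ∑ i, ∑ j, (8 * (P i j) ^ 2 + 8 * (B i j) ^ 2) :=
        Finset.sum_le_sum fun i _ => Finset.sum_le_sum fun j _ => hpt i j
    _ = 8 * ∑ i, ∑ j, (P i j) ^ 2 + 8 * ∑ i, ∑ j, (B i j) ^ 2 := by
        simp only [Finset.sum_add_distrib, Finset.mul_sum]
    _ ≤ 16 * (KZ : ℝ) := by rw [hPsum]; linarith

/-- Lemma 1(iii): Under the balanced-design assumption, there exists a constant
`C` depending only on `δ` such that `∑_{i,j} A_ij⁴ ≤ C K_Z`; consequently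
`(1/K_Z²) ∑_{i,j} A_ij⁴ → 0` as `K_Z → ∞`. -/
theorem lemma1_part_iii (δ : ℝ) (hδ : δ < 1) :
    ∃ C : ℝ, 0 < C ∧
      (∀ (N KW KZ : ℕ) (W : Matrix (Fin N) (Fin KW) ℝ)
        (Pperp : Matrix (Fin N) (Fin N) ℝ) (θ : Fin N → ℝ),
        BalancedDesign KZ W Pperp θ δ →
        ∑ i, ∑ j, (Amat W Pperp θ i j) ^ 4 ≤ C * (KZ : ℝ)) ∧
      (∀ (N KW KZ : ℕ → ℕ)
        (W : ∀ n, Matrix (Fin (N n)) (Fin (KW n)) ℝ)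
        (Pperp : ∀ n, Matrix (Fin (N n)) (Fin (N n)) ℝ)
        (θ : ∀ n, Fin (N n) → ℝ),
        (∀ n, BalancedDesign (KZ n) (W n) (Pperp n) (θ n) δ) →
        Filter.Tendsto KZ Filter.atTop Filter.atTop →
        Filter.Tendsto
          (fun n => (1 / (KZ n : ℝ) ^ 2) *
            ∑ i, ∑ j, (Amat (W n) (Pperp n) (θ n) i j) ^ 4)
          Filter.atTop (nhds 0)) := by
  refine ⟨16, by norm_num, fun N KW KZ W P θ h => main_bound hδ h, ?_⟩
  intro N KW KZ W P θ h hK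
  have hK' : Filter.Tendsto (fun n => (KZ n : ℝ)) Filter.atTop Filter.atTop :=
    tendsto_natCast_atTop_atTop.comp hK
  have hlim : Filter.Tendsto (fun n => 16 / (KZ n : ℝ)) Filter.atTop (nhds 0) :=
    hK'.const_div_atTop 16
  refine squeeze_zero (fun n => ?_) (fun n => ?_) hlim
  · have : 0 ≤ ∑ i, ∑ j, (Amat (W n) (P n) (θ n) i j) ^ 4 :=
      Finset.sum_nonneg fun i _ => Finset.sum_nonneg fun j _ => by positivity
    positivity
  · have hb := main_bound hδ (h n)
    calc _ ≤ (1 / (KZ n : ℝ) ^ 2) * (16 * (KZ n : ℝ)) :=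
          mul_le_mul_of_nonneg_left hb (by positivity)
      _ = 16 / (KZ n : ℝ) := by
          by_cases hz : (KZ n : ℝ) = 0
          · simp [hz]
          · field_simp
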